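/- Work in the polynomial ring ℤ[q]. For n ≥ 0 set [n]_q = 1 + q + ⋯ + q^{n−1} (the q-analog of n) and [n]_q! = ∏_{i=1}^{n} [i]_q, and let φ : ℤ[q] → ℤ[q] be the ring endomorphism determined by φ(q) = q^p, i.e., φ(f)(q) = f(q^p). Then for every m ≥ 0 there exists u ∈ ℤ[q] such that [mp]_q! = u · φ([m]_q!) · ([p]_q)^m and the integer u(1) (the value of u at q = 1) is not divisible by p. (Since an element of ℤ_p⟦q−1⟧ is a unit exactly when its value at q = 1 is a p-adic unit, this is the identity [mp]_q! = u · φ([m]_q!) · [p]_q^m with u a unit in ℤ_p⟦q−1⟧.) -/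

import Mathlib

/-!
The factors `[i]_q` of `[mp]_q!` split according to whether `p ∣ i`. Those with `i = kp` satisfy
`[kp]_q = φ([k]_q) · [p]_q` (`qNat_mul`), and together contribute `φ([m]_q!) · [p]_q ^ m`.
The remaining ones make up `u`; since `[i]_q` takes the value `i` at `q = 1`, the value `u(1)` is a
product of integers prime to `p`. The proof is an induction on `m`, each step adding one block of
`p` consecutive factors.
-/

open Polynomial

/-- The `q`-analog `[n]_q = 1 + q + ⋯ + q^(n-1)` in `ℤ[q]`. -/
noncomputable def qNat (n : ℕ) : Polynomial ℤ := ∑ i ∈ Finset.range n, Polynomial.X ^ i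

/-- The `q`-factorial `[n]_q! = ∏_{i=1}^n [i]_q` in `ℤ[q]`. -/
noncomputable def qFact : ℕ → Polynomial ℤ
  | 0 => 1
  | n + 1 => qFact n * qNat (n + 1)

lemma qNat_eval_one (n : ℕ) : (qNat n).eval 1 = n := by
  simp [qNat, eval_finsetSum]

lemma qNat_mul (m p : ℕ) : qNat (m * p) = (qNat m).comp (X ^ p) * qNat p := by
  induction m with
  | zero => simp [qNat]
  | succ m ih =>
    have h1 : qNat ((m + 1) * p) = qNat (m * p) + X ^ (m * p) * qNat p := by
      simp only [qNat, add_mul, one_mul, Finset.sum_range_add, pow_add, Finset.mul_sum]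
    have h2 : qNat (m + 1) = qNat m + X ^ m := by
      simp only [qNat, Finset.sum_range_succ]
    rw [h1, h2, ih, add_comp, X_pow_comp, ← pow_mul, mul_comm p m, add_mul]

lemma qFact_add (n k : ℕ) :
    qFact (n + k) = qFact n * ∏ i ∈ Finset.range k, qNat (n + i + 1) := by
  induction k with
  | zero => simp
  | succ k ih => rw [← add_assoc, qFact, ih, Finset.prod_range_succ, mul_assoc]

/-- For every `m ≥ 0` there is `u ∈ ℤ[q]` with
`[mp]_q! = u · φ([m]_q!) · ([p]_q)^m` (where `φ` is the substitution `q ↦ q^p`) and `u(1)`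
not divisible by `p`; i.e., `u` is a unit of `ℤ_p⟦q-1⟧`. -/
theorem stmt19 (p : ℕ) (hp : p.Prime) (m : ℕ) :
    ∃ u : Polynomial ℤ,
      qFact (m * p) = u * (qFact m).comp (Polynomial.X ^ p) * qNat p ^ m ∧
      ¬ ((p : ℤ) ∣ u.eval 1) := by
  have hpZ : Prime (p : ℤ) := Nat.prime_iff_prime_int.mp hp
  induction m with
  | zero => exact ⟨1, by simp [qFact], by simpa using hpZ.not_dvd_one⟩
  | succ m ih =>
    obtain ⟨u, hu, hu1⟩ := ih
    refine ⟨u * ∏ i ∈ Finset.range (p - 1), qNat (m * p + i + 1), ?_, ?_⟩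
    · have hidx : (m + 1) * p = m * p + (p - 1) + 1 := by
        have := hp.pos
        rw [add_mul]; omega
      have h : qFact ((m + 1) * p) = qFact (m * p + (p - 1)) * qNat ((m + 1) * p) := by
        rw [hidx, qFact]
      rw [h, qFact_add, hu, qNat_mul, qFact, mul_comp]
      ring
    · rw [eval_mul, eval_prod]
      intro hdvd
      rcases hpZ.dvd_or_dvd hdvd with h | h
      · exact hu1 h
      · obtain ⟨i, hi, hdi⟩ := (hpZ.dvd_finsetProd_iff _).mp h
        rw [qNat_eval_one, Int.natCast_dvd_natCast, add_assoc,
          Nat.dvd_add_right (Dvd.intro_left m rfl)] at hdi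
        have := Nat.le_of_dvd (Nat.succ_pos i) hdi
        have := Finset.mem_range.mp hi
        omega
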